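/- arXiv:1705.02717 — 3 statements merged into one kernel-verified Lean document; each statement's English description precedes it below -/
import Mathlib

section
/- Let κ₁, κ₂, κ₃ be nonnegative integers with κ₁+κ₂+κ₃ = 2r even and κᵢ* := r − κᵢ ≥ 0 for i = 1,2,3. Then the self-pairing of the balanced invariant polynomial 𝐏 satisfies ⟨𝐏, 𝐏⟩ = (r+1)! · κ₁*! · κ₂*! · κ₃*! / (κ₁! · κ₂! · κ₃!). -/
open MvPolynomial Finset

/-- The variable `Xᵢ` in the polynomial ring `ℚ[X₁,Y₁,X₂,Y₂,X₃,Y₃]`. -/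
noncomputable def Xv (i : Fin 3) : MvPolynomial (Fin 3 × Fin 2) ℚ := MvPolynomial.X (i, 0)

/-- The variable `Yᵢ` in the polynomial ring `ℚ[X₁,Y₁,X₂,Y₂,X₃,Y₃]`. -/
noncomputable def Yv (i : Fin 3) : MvPolynomial (Fin 3 × Fin 2) ℚ := MvPolynomial.X (i, 1)

/-- The exponent multiset of the monomial `X₁^{e 0 0} Y₁^{e 0 1} X₂^{e 1 0} Y₂^{e 1 1}
X₃^{e 2 0} Y₃^{e 2 1}`. -/
noncomputable def expv (e : Fin 3 → Fin 2 → ℕ) : (Fin 3 × Fin 2) →₀ ℕ :=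
  Finsupp.equivFunOnFinite.symm fun q => e q.1 q.2

/-- The pairing `⟨P,Q⟩` on tri-homogeneous polynomials of multidegree `(κ₁, κ₂, κ₃)`. -/
noncomputable def triPair (κ₁ κ₂ κ₃ : ℕ) (P Q : MvPolynomial (Fin 3 × Fin 2) ℚ) : ℚ :=
  ∑ i₁ ∈ Finset.range (κ₁ + 1), ∑ i₂ ∈ Finset.range (κ₂ + 1), ∑ i₃ ∈ Finset.range (κ₃ + 1),
    (-1 : ℚ) ^ (i₁ + i₂ + i₃) *
      MvPolynomial.coeff (expv ![![i₁, κ₁ - i₁], ![i₂, κ₂ - i₂], ![i₃, κ₃ - i₃]]) P *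
      MvPolynomial.coeff (expv ![![κ₁ - i₁, i₁], ![κ₂ - i₂, i₂], ![κ₃ - i₃, i₃]]) Q /
      ((κ₁.choose i₁ : ℚ) * (κ₂.choose i₂ : ℚ) * (κ₃.choose i₃ : ℚ))

/-- The balanced invariant polynomial
`𝐏 = (X₁Y₂ − X₂Y₁)^{κ₃*} (X₃Y₁ − X₁Y₃)^{κ₂*} (X₃Y₂ − X₂Y₃)^{κ₁*}`. -/
noncomputable def bP (κ₁s κ₂s κ₃s : ℕ) : MvPolynomial (Fin 3 × Fin 2) ℚ :=
  (Xv 0 * Yv 1 - Xv 1 * Yv 0) ^ κ₃s * (Xv 2 * Yv 0 - Xv 0 * Yv 2) ^ κ₂s *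
    (Xv 2 * Yv 1 - Xv 1 * Yv 2) ^ κ₁s

/-- Exchange the exponents of `Xᵢ` and `Yᵢ`. -/
noncomputable def swapExp (m : (Fin 3 × Fin 2) →₀ ℕ) : (Fin 3 × Fin 2) →₀ ℕ :=
  Finsupp.equivFunOnFinite.symm fun q => m (q.1, 1 - q.2)

/-- Signed factorial weight. -/
noncomputable def wt (m : (Fin 3 × Fin 2) →₀ ℕ) : ℚ :=
  (-1) ^ (m (0, 0) + m (1, 0) + m (2, 0)) * ∏ q, ((m q).factorial : ℚ)

/-- The rescaled bilinear pairing on all polynomials. -/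
noncomputable def BB : MvPolynomial (Fin 3 × Fin 2) ℚ →ₗ[ℚ] MvPolynomial (Fin 3 × Fin 2) ℚ →ₗ[ℚ] ℚ :=
  (basisMonomials (Fin 3 × Fin 2) ℚ).constr ℚ (fun m => wt m • lcoeff ℚ (swapExp m))

lemma BB_monomial (m : (Fin 3 × Fin 2) →₀ ℕ) (Q : MvPolynomial (Fin 3 × Fin 2) ℚ) :
    BB (monomial m 1) Q = wt m * coeff (swapExp m) Q := by
  have := (basisMonomials (Fin 3 × Fin 2) ℚ).constr_basis ℚ
    (fun m => wt m • lcoeff ℚ (swapExp m)) m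
  rw [coe_basisMonomials] at this
  unfold BB
  rw [this]
  simp

lemma BB_apply (P Q : MvPolynomial (Fin 3 × Fin 2) ℚ) :
    BB P Q = ∑ m ∈ P.support, coeff m P * (wt m * coeff (swapExp m) Q) := by
  conv_lhs => rw [P.as_sum]
  simp only [map_sum, LinearMap.sum_apply]
  refine Finset.sum_congr rfl fun m _ => ?_
  have : monomial m (coeff m P) = coeff m P • (monomial m (1 : ℚ)) := by
    simp [smul_monomial]
  rw [this, map_smul, LinearMap.smul_apply, BB_monomial, smul_eq_mul]

lemma swapExp_add_single (m : (Fin 3 × Fin 2) →₀ ℕ) (v : Fin 3 × Fin 2) :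
    swapExp (m + Finsupp.single v 1) = swapExp m + Finsupp.single (v.1, 1 - v.2) 1 := by
  ext q
  obtain ⟨i, j⟩ := v
  obtain ⟨k, l⟩ := q
  simp only [swapExp, Finsupp.coe_add, Pi.add_apply, Finsupp.equivFunOnFinite_symm_apply_apply,
    Finsupp.single_apply, Prod.mk.injEq]
  fin_cases j <;> fin_cases l <;> simp

lemma wt_add_single (m : (Fin 3 × Fin 2) →₀ ℕ) (v : Fin 3 × Fin 2) :
    wt (m + Finsupp.single v 1) = (if v.2 = 0 then -1 else 1) * (m v + 1) * wt m := by
  obtain ⟨i, j⟩ := v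
  fin_cases i <;> fin_cases j <;>
  simp [wt, Fintype.prod_prod_type, Fin.prod_univ_succ, Finsupp.single_apply,
    Nat.factorial_succ, pow_succ, pow_add] <;> ring

lemma BB_X_mul (v : Fin 3 × Fin 2) (P Q : MvPolynomial (Fin 3 × Fin 2) ℚ) :
    BB (X v * P) Q = (if v.2 = 0 then -1 else 1) * BB P (pderiv (v.1, 1 - v.2) Q) := by
  induction P using MvPolynomial.induction_on' with
  | monomial m a =>
    have h : X v * monomial m a = a • monomial (m + Finsupp.single v 1) (1 : ℚ) := by
      rw [X, monomial_mul, smul_monomial, add_comm]; simp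
    have h' : monomial m a = a • (monomial m (1 : ℚ)) := by
      simp [smul_monomial]
    rw [h, h']
    simp only [map_smul, LinearMap.smul_apply, BB_monomial, smul_eq_mul]
    rw [swapExp_add_single, wt_add_single, coeff_pderiv]
    have : swapExp m (v.1, 1 - v.2) = m v := by
      obtain ⟨i, j⟩ := v
      fin_cases j <;> simp [swapExp]
    rw [this]
    ring
  | add p q hp hq =>
    rw [mul_add, map_add, map_add, LinearMap.add_apply, LinearMap.add_apply, hp, hq]; ring

lemma BB_det_mul (i j : Fin 3) (P Q : MvPolynomial (Fin 3 × Fin 2) ℚ) :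
    BB ((Xv i * Yv j - Xv j * Yv i) * P) Q =
      BB P (pderiv (i, 0) (pderiv (j, 1) Q) - pderiv (j, 0) (pderiv (i, 1) Q)) := by
  have h : (Xv i * Yv j - Xv j * Yv i) * P =
    X (i, 0) * (X (j, 1) * P) - X (j, 0) * (X (i, 1) * P) := by
    simp only [Xv, Yv]; ring
  rw [h, map_sub, LinearMap.sub_apply]
  simp only [BB_X_mul, map_sub]
  simp
  ring

lemma step3 (a b c : ℕ) :
    pderiv (0, 0) (pderiv (1, 1) (bP a b (c+1))) - pderiv (1, 0) (pderiv (0, 1) (bP a b (c+1)))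
      = (((c + 1) * (a + b + c + 2) : ℕ) : ℚ) • bP a b c := by
  rw [Nat.cast_smul_eq_nsmul, nsmul_eq_mul]
  rcases a with _ | a <;> rcases b with _ | b <;> rcases c with _ | c <;>
  simp [bP, Xv, Yv, Derivation.leibniz, Derivation.leibniz_pow, pderiv_X, Pi.single_apply] <;> ring

lemma step2 (a b c : ℕ) :
    pderiv (2, 0) (pderiv (0, 1) (bP a (b+1) c)) - pderiv (0, 0) (pderiv (2, 1) (bP a (b+1) c))
      = (((b + 1) * (a + b + c + 2) : ℕ) : ℚ) • bP a b c := by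
  rw [Nat.cast_smul_eq_nsmul, nsmul_eq_mul]
  rcases a with _ | a <;> rcases b with _ | b <;> rcases c with _ | c <;>
  simp [bP, Xv, Yv, Derivation.leibniz, Derivation.leibniz_pow, pderiv_X, Pi.single_apply] <;> ring

lemma step1 (a b c : ℕ) :
    pderiv (2, 0) (pderiv (1, 1) (bP (a+1) b c)) - pderiv (1, 0) (pderiv (2, 1) (bP (a+1) b c))
      = (((a + 1) * (a + b + c + 2) : ℕ) : ℚ) • bP a b c := by
  rw [Nat.cast_smul_eq_nsmul, nsmul_eq_mul]
  rcases a with _ | a <;> rcases b with _ | b <;> rcases c with _ | c <;>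
  simp [bP, Xv, Yv, Derivation.leibniz, Derivation.leibniz_pow, pderiv_X, Pi.single_apply] <;> ring

lemma BB_self (a b c : ℕ) : BB (bP a b c) (bP a b c) =
    ((a + b + c + 1).factorial : ℚ) * a.factorial * b.factorial * c.factorial := by
  induction c with
  | succ c ih =>
    have h : bP a b (c+1) = (Xv 0 * Yv 1 - Xv 1 * Yv 0) * bP a b c := by
      unfold bP; ring
    conv_lhs => enter [1]; rw [h]
    rw [BB_det_mul, step3, map_smul, ih, smul_eq_mul,
      show a + b + (c + 1) + 1 = (a + b + c + 1) + 1 by ring, Nat.factorial_succ (a + b + c + 1),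
      Nat.factorial_succ c]
    push_cast; ring
  | zero =>
  induction b with
  | succ b ih =>
    have h : bP a (b+1) 0 = (Xv 2 * Yv 0 - Xv 0 * Yv 2) * bP a b 0 := by
      unfold bP; ring
    conv_lhs => enter [1]; rw [h]
    rw [BB_det_mul, step2, map_smul, ih, smul_eq_mul,
      show a + (b + 1) + 0 + 1 = (a + b + 0 + 1) + 1 by ring, Nat.factorial_succ (a + b + 0 + 1),
      Nat.factorial_succ b]
    push_cast; ring
  | zero =>
  induction a with
  | succ a ih =>
    have h : bP (a+1) 0 0 = (Xv 2 * Yv 1 - Xv 1 * Yv 2) * bP a 0 0 := by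
      unfold bP; ring
    conv_lhs => enter [1]; rw [h]
    rw [BB_det_mul, step1, map_smul, ih, smul_eq_mul,
      show a + 1 + 0 + 0 + 1 = (a + 0 + 0 + 1) + 1 by ring, Nat.factorial_succ (a + 0 + 0 + 1),
      Nat.factorial_succ a]
    push_cast; ring
  | zero =>
    have h : bP 0 0 0 = monomial 0 (1 : ℚ) := by simp [bP]
    have h0 : swapExp 0 = 0 := by ext; simp [swapExp]
    rw [h, BB_monomial, h0]
    simp [wt]

/-- weight function detecting the degree in the `i`-th pair of variables -/
def wi (i : Fin 3) (q : Fin 3 × Fin 2) : ℕ := if q.1 = i then 1 else 0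

lemma det_hom (i j k : Fin 3) : IsWeightedHomogeneous (wi k)
    (Xv i * Yv j - Xv j * Yv i) ((if i = k then 1 else 0) + (if j = k then 1 else 0)) := by
  have hX : ∀ i, IsWeightedHomogeneous (wi k) (Xv i) (if i = k then 1 else 0) := fun i =>
    isWeightedHomogeneous_X ℚ (wi k) (i, 0)
  have hY : ∀ i, IsWeightedHomogeneous (wi k) (Yv i) (if i = k then 1 else 0) := fun i =>
    isWeightedHomogeneous_X ℚ (wi k) (i, 1)
  have h2 := (hX j).mul (hY i)
  rw [add_comm] at h2
  rw [← mem_weightedHomogeneousSubmodule]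
  exact Submodule.sub_mem _ ((hX i).mul (hY j)) h2

lemma bP_hom (a b c : ℕ) (k : Fin 3) :
    IsWeightedHomogeneous (wi k) (bP a b c) (![b + c, a + c, a + b] k) := by
  have := (((det_hom 0 1 k).pow c).mul ((det_hom 2 0 k).pow b)).mul ((det_hom 2 1 k).pow a)
  unfold bP
  convert this using 1
  fin_cases k <;> simp <;> ring

lemma bP_deg (a b c : ℕ) (m : (Fin 3 × Fin 2) →₀ ℕ) (hm : m ∈ (bP a b c).support) (k : Fin 3) :
    m (k, 0) + m (k, 1) = ![b + c, a + c, a + b] k := by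
  rw [← bP_hom a b c k (mem_support_iff.mp hm), Finsupp.weight_apply,
    Finsupp.sum_fintype _ _ (by simp)]
  fin_cases k <;> simp [Fintype.prod_sum_type, Fintype.sum_prod_type, Fin.sum_univ_succ, wi]

lemma triPair_eq (a b c : ℕ) (Q : MvPolynomial (Fin 3 × Fin 2) ℚ) :
    triPair (b + c) (a + c) (a + b) (bP a b c) Q =
      BB (bP a b c) Q / (((b + c).factorial : ℚ) * (a + c).factorial * (a + b).factorial) := by
  set e : ℕ × ℕ × ℕ → ((Fin 3 × Fin 2) →₀ ℕ) := fun i =>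
    expv ![![i.1, b + c - i.1], ![i.2.1, a + c - i.2.1], ![i.2.2, a + b - i.2.2]] with he
  have hinj : Function.Injective e := by
    intro i j hij
    have h0 := DFunLike.congr_fun hij (0, 0)
    have h1 := DFunLike.congr_fun hij (1, 0)
    have h2 := DFunLike.congr_fun hij (2, 0)
    simp [he, expv] at h0 h1 h2
    ext <;> assumption
  rw [BB_apply]
  have hsub : (bP a b c).support ⊆
      (range (b + c + 1) ×ˢ range (a + c + 1) ×ˢ range (a + b + 1)).image e := by
    intro m hm
    have h0 := bP_deg a b c m hm 0
    have h1 := bP_deg a b c m hm 1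
    have h2 := bP_deg a b c m hm 2
    simp at h0 h1 h2
    rw [mem_image]
    refine ⟨(m (0, 0), m (1, 0), m (2, 0)), ?_, ?_⟩
    · simp; omega
    · ext ⟨i, j⟩
      fin_cases i <;> fin_cases j <;> simp [he, expv] <;> omega
  rw [Finset.sum_subset hsub (by
    intro m _ hm
    rw [notMem_support_iff.mp hm, zero_mul]), Finset.sum_image (fun _ _ _ _ h => hinj h)]
  simp only [Finset.sum_product, triPair, Finset.sum_div]
  refine Finset.sum_congr rfl fun i hi => Finset.sum_congr rfl fun j hj =>
    Finset.sum_congr rfl fun k hk => ?_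
  have hs : swapExp (e (i, j, k)) =
      expv ![![b + c - i, i], ![a + c - j, j], ![a + b - k, k]] := by
    ext ⟨x, y⟩
    fin_cases x <;> fin_cases y <;> simp [he, expv, swapExp]
  rw [hs]
  have hw : wt (e (i, j, k)) = (-1) ^ (i + j + k) * ((i.factorial * (b + c - i).factorial) *
      (j.factorial * (a + c - j).factorial) * (k.factorial * (a + b - k).factorial)) := by
    simp [wt, he, expv, Fintype.prod_prod_type, Fin.prod_univ_succ]; ring
  rw [hw]
  have hi' : i ≤ b + c := by simp at hi; omega
  have hj' : j ≤ a + c := by simp at hj; omega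
  have hk' : k ≤ a + b := by simp at hk; omega
  rw [Nat.cast_choose ℚ hi', Nat.cast_choose ℚ hj', Nat.cast_choose ℚ hk']
  have f : ∀ n : ℕ, (n.factorial : ℚ) ≠ 0 := fun n => by positivity
  have := f i; have := f j; have := f k
  have := f (b+c-i); have := f (a+c-j); have := f (a+b-k)
  have := f (b+c); have := f (a+c); have := f (a+b)
  simp only [he]
  field_simp

/-- The self-pairing of the balanced invariant polynomial:
`⟨𝐏, 𝐏⟩ = (r+1)!·κ₁*!·κ₂*!·κ₃*!/(κ₁!·κ₂!·κ₃!)`. -/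
theorem triPair_bP_self (κ₁ κ₂ κ₃ r : ℕ) (hsum : κ₁ + κ₂ + κ₃ = 2 * r)
    (h1 : κ₁ ≤ r) (h2 : κ₂ ≤ r) (h3 : κ₃ ≤ r) :
    triPair κ₁ κ₂ κ₃ (bP (r - κ₁) (r - κ₂) (r - κ₃)) (bP (r - κ₁) (r - κ₂) (r - κ₃)) =
      ((r + 1).factorial : ℚ) * (r - κ₁).factorial * (r - κ₂).factorial * (r - κ₃).factorial /
        ((κ₁.factorial : ℚ) * κ₂.factorial * κ₃.factorial) := by
  obtain ⟨a, rfl⟩ : ∃ a, r = κ₁ + a := ⟨r - κ₁, by omega⟩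
  obtain ⟨b, hb⟩ : ∃ b, κ₁ + a = κ₂ + b := ⟨κ₁ + a - κ₂, by omega⟩
  obtain ⟨c, hc⟩ : ∃ c, κ₁ + a = κ₃ + c := ⟨κ₁ + a - κ₃, by omega⟩
  have e1 : κ₁ + a - κ₁ = a := by omega
  have e2 : κ₁ + a - κ₂ = b := by omega
  have e3 : κ₁ + a - κ₃ = c := by omega
  rw [e1, e2, e3]
  obtain rfl : κ₁ = b + c := by omega
  obtain rfl : κ₂ = a + c := by omega
  obtain rfl : κ₃ = a + b := by omega
  rw [triPair_eq, BB_self, show b + c + a + 1 = a + b + c + 1 by ring]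
end

section
/- For natural numbers a, b, r with a + b ≤ r, one has Σ_{j=0}^{a} (−1)^j · binom(a,j) · binom(b,j) / binom(r,j) = ((r−a)! · a! / r!) · binom(r−b, r−a−b), as an equality of rational numbers. (Note binom(r,j) > 0 for all 0 ≤ j ≤ a since a ≤ r.) -/
theorem alt_aux_step (b : ℕ) (f : ℕ → ℚ) :
    ∑ j ∈ Finset.range (b + 2), (-1 : ℚ) ^ j * ((b + 1).choose j : ℚ) * f j =
      ∑ j ∈ Finset.range (b + 1), (-1 : ℚ) ^ j * (b.choose j : ℚ) * f j -
      ∑ j ∈ Finset.range (b + 1), (-1 : ℚ) ^ j * (b.choose j : ℚ) * f (j + 1) := by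
  have h1 : ∑ j ∈ Finset.range (b + 1), (-1 : ℚ) ^ j * (b.choose j : ℚ) * f j =
      ∑ j ∈ Finset.range (b + 2), (-1 : ℚ) ^ j * (b.choose j : ℚ) * f j := by
    rw [Finset.sum_range_succ _ (b + 1)]
    simp
  rw [h1, Finset.sum_range_succ', Finset.sum_range_succ' _ (b + 1), add_sub_right_comm,
    ← Finset.sum_sub_distrib]
  congr 1
  · apply Finset.sum_congr rfl
    intro j _
    rw [Nat.choose_succ_succ]
    push_cast
    ring
  · simp

theorem alt_aux (b : ℕ) : ∀ r m : ℕ, b ≤ r → b ≤ m →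
    ∑ j ∈ Finset.range (b + 1), (-1 : ℚ) ^ j * (b.choose j : ℚ) * ((r - j).choose m : ℚ) =
      ((r - b).choose (m - b) : ℚ) := by
  induction b with
  | zero => intro r m _ _; simp
  | succ b ih =>
    intro r m hr hm
    rw [alt_aux_step b (fun j => ((r - j).choose m : ℚ)), ih r m (by omega) (by omega)]
    have h2 := ih (r - 1) m (by omega) (by omega)
    have h3 : ∀ j, r - 1 - j = r - (j + 1) := fun j => by omega
    simp only [h3] at h2
    rw [h2]
    obtain ⟨s, rfl⟩ := Nat.exists_eq_add_of_le hr
    obtain ⟨t, rfl⟩ := Nat.exists_eq_add_of_le hm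
    rw [show b + 1 + s - b = s + 1 by omega, show b + 1 + t - b = t + 1 by omega,
      show b + 1 + s - (b + 1) = s by omega, show b + 1 + t - (b + 1) = t by omega,
      Nat.choose_succ_succ]
    push_cast
    ring

/-- The alternating rational binomial identity
`Σ_{j=0}^{a} (−1)^j · binom(a,j) · binom(b,j) / binom(r,j)
  = ((r−a)!·a!/r!) · binom(r−b, r−a−b)` for `a + b ≤ r`. -/
theorem alternating_rational_binomial_sum (a b r : ℕ) (h : a + b ≤ r) :
    ∑ j ∈ Finset.range (a + 1),
        (-1 : ℚ) ^ j * (a.choose j : ℚ) * (b.choose j : ℚ) / (r.choose j : ℚ) =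
      ((r - a).factorial : ℚ) * (a.factorial : ℚ) / (r.factorial : ℚ) *
        ((r - b).choose (r - a - b) : ℚ) := by
  rw [← alt_aux b r (r - a) (by omega) (by omega)]
  have hA : ∑ j ∈ Finset.range (b + 1),
      (-1 : ℚ) ^ j * (b.choose j : ℚ) * ((r - j).choose (r - a) : ℚ) =
      ∑ j ∈ Finset.range (a + b + 1),
      (-1 : ℚ) ^ j * (b.choose j : ℚ) * ((r - j).choose (r - a) : ℚ) := by
    apply Finset.sum_subset
    · intro j; simp only [Finset.mem_range]; omega
    · intro j _ hj
      rw [Nat.choose_eq_zero_of_lt (n := b) (by simp only [Finset.mem_range] at hj; omega)]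
      simp
  have hB : ∑ j ∈ Finset.range (a + 1),
      (-1 : ℚ) ^ j * (b.choose j : ℚ) * ((r - j).choose (r - a) : ℚ) =
      ∑ j ∈ Finset.range (a + b + 1),
      (-1 : ℚ) ^ j * (b.choose j : ℚ) * ((r - j).choose (r - a) : ℚ) := by
    apply Finset.sum_subset
    · intro j; simp only [Finset.mem_range]; omega
    · intro j hj' hj
      rw [Nat.choose_eq_zero_of_lt (n := r - j)
        (by simp only [Finset.mem_range] at hj hj'; omega)]
      simp
  rw [hA, ← hB, Finset.mul_sum]
  apply Finset.sum_congr rfl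
  intro j hj
  have hj : j ≤ a := by simp only [Finset.mem_range] at hj; omega
  rw [Nat.cast_choose ℚ hj, Nat.cast_choose ℚ (show j ≤ r by omega),
    Nat.cast_choose ℚ (show r - a ≤ r - j by omega),
    show r - j - (r - a) = a - j by omega]
  have := fun n : ℕ => (Nat.cast_ne_zero (R := ℚ)).2 n.factorial_ne_zero
  have h1 := this r
  have h2 := this a
  have h3 := this j
  have h4 := this (a - j)
  have h5 := this (r - j)
  have h6 := this (r - a)
  field_simp
end

section
/- Let p be a prime, n a natural number, y₁, y₂ ∈ ℚ_p^× and x ∈ ℚ_p. The matrix [[y₂^{−1}y₁, y₂^{−1}x],[0,1]] belongs to Z·K_n if and only if p^{−n} ≤ |y₂^{−1}y₁|_p ≤ p^{n} and |x|_p² ≤ p^{n} · |y₁y₂|_p. -/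
open Matrix

/-- The maximal compact subgroup `K = GL₂(ℤ_p)`, viewed as the set of `2×2` matrices over
`ℚ_p` with entries in `ℤ_p` and determinant a `p`-adic unit. -/
def Kgp (p : ℕ) [Fact p.Prime] : Set (Matrix (Fin 2) (Fin 2) ℚ_[p]) :=
  {g | (∀ i j, ‖g i j‖ ≤ 1) ∧ ‖g.det‖ = 1}

/-- `K_n = ⋃_{i=0}^{n} K · diag(pⁱ, 1) · K`. -/
def Kn (p : ℕ) [Fact p.Prime] (n : ℕ) : Set (Matrix (Fin 2) (Fin 2) ℚ_[p]) :=
  {m | ∃ i ≤ n, ∃ k₁ ∈ Kgp p, ∃ k₂ ∈ Kgp p,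
    m = k₁ * Matrix.diagonal ![(p : ℚ_[p]) ^ i, 1] * k₂}

/-- `Z·K_n`: the set of nonzero scalar multiples of elements of `K_n`. -/
def ZKn (p : ℕ) [Fact p.Prime] (n : ℕ) : Set (Matrix (Fin 2) (Fin 2) ℚ_[p]) :=
  {m | ∃ z : ℚ_[p], z ≠ 0 ∧ ∃ g ∈ Kn p n, m = z • g}


lemma mem_ZKn_aux (p : ℕ) [Fact p.Prime] (n : ℕ) (z d : ℚ_[p]) (hz : z ≠ 0) (hd : d ≠ 0)
    (hd1 : ‖d‖ ≤ 1) (hdn : (p : ℝ) ^ (-(n : ℤ)) ≤ ‖d‖)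
    (k₁ k₂ : Matrix (Fin 2) (Fin 2) ℚ_[p]) (h₁ : k₁ ∈ Kgp p) (h₂ : k₂ ∈ Kgp p) :
    z • (k₁ * Matrix.diagonal ![d, 1] * k₂) ∈ ZKn p n := by
  have hp1 : (1 : ℝ) < p := by exact_mod_cast (Fact.out : p.Prime).one_lt
  have hp0 : (p : ℚ_[p]) ≠ 0 := by exact_mod_cast (Fact.out : p.Prime).ne_zero
  have hv := Padic.norm_eq_zpow_neg_valuation hd
  have hv0 : 0 ≤ d.valuation := by
    rw [hv] at hd1
    have := (zpow_le_one_iff_right₀ hp1).1 hd1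
    omega
  have hvn : d.valuation ≤ n := by
    rw [hv] at hdn
    have := (zpow_le_zpow_iff_right₀ hp1).1 hdn
    omega
  obtain ⟨i, hi⟩ := Int.eq_ofNat_of_zero_le hv0
  have hu : ‖d / (p : ℚ_[p]) ^ i‖ = 1 := by
    rw [norm_div, norm_pow, hv, hi, Padic.norm_p, _root_.zpow_neg, zpow_natCast, inv_pow]
    exact div_self (by positivity)
  have hdu : d = (p : ℚ_[p]) ^ i * (d / (p : ℚ_[p]) ^ i) := by field_simp
  generalize d / (p : ℚ_[p]) ^ i = u at hu hdu
  refine ⟨z, hz, _, ⟨i, by omega, k₁, h₁, Matrix.diagonal ![u, 1] * k₂, ⟨?_, ?_⟩, rfl⟩, ?_⟩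
  · intro a b
    rw [Matrix.diagonal_mul]
    fin_cases a
    · simpa [hu] using h₂.1 0 b
    · simpa using h₂.1 1 b
  · rw [Matrix.det_mul, norm_mul, h₂.2]
    simp [hu]
  · rw [← Matrix.mul_assoc, Matrix.mul_assoc k₁ _ (Matrix.diagonal _), Matrix.diagonal_mul_diagonal]
    congr 4
    ext a
    fin_cases a <;> simp [hdu]

lemma ZKn_bound (p : ℕ) [Fact p.Prime] (n : ℕ) (m : Matrix (Fin 2) (Fin 2) ℚ_[p])
    (hm : m ∈ ZKn p n) (a b : Fin 2) : ‖m a b‖ ^ 2 ≤ (p : ℝ) ^ n * ‖m.det‖ := by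
  have hp1 : (1 : ℝ) < p := by exact_mod_cast (Fact.out : p.Prime).one_lt
  obtain ⟨z, hz, g, ⟨i, hi, k₁, h₁, k₂, h₂, rfl⟩, rfl⟩ := hm
  have hdet : ‖(z • (k₁ * Matrix.diagonal ![(p : ℚ_[p]) ^ i, 1] * k₂)).det‖
      = ‖z‖ ^ 2 * ((p : ℝ) ^ i)⁻¹ := by
    rw [Matrix.det_smul, Matrix.det_mul, Matrix.det_mul]
    simp [h₁.2, h₂.2]
  have hent : ‖(k₁ * Matrix.diagonal ![(p : ℚ_[p]) ^ i, 1] * k₂) a b‖ ≤ 1 := by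
    rw [Matrix.mul_apply, Fin.sum_univ_two, Matrix.mul_diagonal, Matrix.mul_diagonal]
    refine (Padic.nonarchimedean _ _).trans (max_le ?_ ?_)
    · rw [norm_mul, norm_mul]
      refine mul_le_one₀ (mul_le_one₀ (h₁.1 _ _) (norm_nonneg _) ?_) (norm_nonneg _) (h₂.1 _ _)
      simp only [Matrix.cons_val_zero, norm_pow, Padic.norm_p]
      exact pow_le_one₀ (by positivity) (inv_le_one_of_one_le₀ hp1.le)
    · simp only [Matrix.cons_val_one, Matrix.cons_val_fin_one, mul_one, norm_mul]
      exact mul_le_one₀ (h₁.1 _ _) (norm_nonneg _) (h₂.1 _ _)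
  rw [hdet, Matrix.smul_apply, smul_eq_mul, norm_mul, mul_pow]
  have h1 : (1 : ℝ) ≤ (p : ℝ) ^ n * ((p : ℝ) ^ i)⁻¹ := by
    rw [← div_eq_mul_inv, one_le_div (by positivity)]
    exact pow_le_pow_right₀ hp1.le hi
  have h2 := pow_le_one₀ (n := 2) (norm_nonneg _) hent
  calc _ ≤ ‖z‖ ^ 2 * 1 := by gcongr
    _ ≤ ‖z‖ ^ 2 * ((p : ℝ) ^ n * ((p : ℝ) ^ i)⁻¹) := by gcongr
    _ = _ := by ring

lemma mem_Kgp_of (p : ℕ) [Fact p.Prime] (a b c d : ℚ_[p]) (ha : ‖a‖ ≤ 1) (hb : ‖b‖ ≤ 1)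
    (hc : ‖c‖ ≤ 1) (hd : ‖d‖ ≤ 1) (h : ‖a * d - b * c‖ = 1) : !![a, b; c, d] ∈ Kgp p := by
  refine ⟨?_, by rwa [Matrix.det_fin_two_of]⟩
  intro i j
  fin_cases i <;> fin_cases j <;> simpa

lemma triple_prod {F : Type*} [Field F] (z a b c d e f g h k : F) :
    z • (!![a, b; c, d] * Matrix.diagonal ![e, 1] * !![f, g; h, k]) =
      !![z * (a * e * f + b * h), z * (a * e * g + b * k);
        z * (c * e * f + d * h), z * (c * e * g + d * k)] := by
  have : Matrix.diagonal ![e, 1] = !![e, 0; 0, 1] := by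
    ext i j
    fin_cases i <;> fin_cases j <;> simp
  rw [this, Matrix.mul_fin_two, Matrix.mul_fin_two, Matrix.smul_of]
  simp

lemma tri_mem (p : ℕ) [Fact p.Prime] (n : ℕ) (a b : ℚ_[p]) (ha : a ≠ 0)
    (h1 : 1 ≤ (p : ℝ) ^ n * ‖a‖) (h2 : ‖a‖ ≤ (p : ℝ) ^ n)
    (h3 : ‖b‖ ^ 2 ≤ (p : ℝ) ^ n * ‖a‖) : !![a, b; 0, 1] ∈ ZKn p n := by
  have hp : (0 : ℝ) < p := by exact_mod_cast (Fact.out : p.Prime).pos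
  have hpn : (0 : ℝ) < (p : ℝ) ^ n := by positivity
  have ha' : 0 < ‖a‖ := norm_pos_iff.2 ha
  by_cases c1 : ‖a‖ ≤ 1 ∧ ‖b‖ ≤ 1
  · have := mem_ZKn_aux p n 1 a one_ne_zero ha c1.1
      (by rw [_root_.zpow_neg, zpow_natCast, inv_le_iff_one_le_mul₀' hpn]; exact h1)
      !![1, b; 0, 1] !![1, 0; 0, 1] (mem_Kgp_of _ _ _ _ _ (by simp) c1.2 (by simp) (by simp)
        (by simp)) (mem_Kgp_of _ _ _ _ _ (by simp) (by simp) (by simp) (by simp) (by simp))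
    rw [triple_prod] at this
    convert this using 1
    ext i j
    fin_cases i <;> fin_cases j <;> simp <;> field_simp <;> simp
  by_cases c2 : 1 ≤ ‖a‖ ∧ ‖b‖ ≤ ‖a‖
  · have := mem_ZKn_aux p n a a⁻¹ ha (inv_ne_zero ha)
      (by rw [norm_inv]; exact inv_le_one_of_one_le₀ c2.1)
      (by rw [_root_.zpow_neg, zpow_natCast, norm_inv]; gcongr)
      !![0, 1; 1, 0] !![0, 1; 1, b / a] (mem_Kgp_of _ _ _ _ _ (by simp) (by simp) (by simp)
        (by simp) (by simp)) (mem_Kgp_of _ _ _ _ _ (by simp) (by simp) (by simp)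
        (by rw [norm_div]; exact div_le_one_of_le₀ c2.2 ha'.le) (by simp))
    rw [triple_prod] at this
    convert this using 1
    ext i j
    fin_cases i <;> fin_cases j <;> simp <;> field_simp <;> simp
  have c3 : 1 ≤ ‖b‖ ∧ ‖a‖ ≤ ‖b‖ := by
    by_contra h
    rcases le_total 1 ‖a‖ with h4 | h4 <;> grind
  have hb' : 0 < ‖b‖ := by linarith [c3.1]
  have hb : b ≠ 0 := norm_pos_iff.1 hb'
  have hab : ‖a / b‖ ≤ 1 := by rw [norm_div]; exact div_le_one_of_le₀ c3.2 hb'.le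
  have hb1 : ‖b⁻¹‖ ≤ 1 := by rw [norm_inv]; exact inv_le_one_of_one_le₀ c3.1
  have := mem_ZKn_aux p n b (a / b * b⁻¹) hb (by positivity)
      (by rw [norm_mul]; exact mul_le_one₀ hab (norm_nonneg _) hb1)
      (by
        rw [_root_.zpow_neg, zpow_natCast, norm_mul, norm_div, norm_inv, inv_le_iff_one_le_mul₀' hpn,
          ← div_eq_mul_inv, div_div, ← mul_div_assoc, one_le_div (by positivity), ← sq]
        exact h3)
      !![0, 1; -1, b⁻¹] !![1, 0; a / b, 1] (mem_Kgp_of _ _ _ _ _ (by simp) (by simp) (by simp)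
        hb1 (by simp)) (mem_Kgp_of _ _ _ _ _ (by simp) (by simp) hab (by simp) (by simp))
  rw [triple_prod] at this
  convert this using 1
  ext i j
  fin_cases i <;> fin_cases j <;> simp <;> field_simp <;> simp

/-- `[[y₂⁻¹y₁, y₂⁻¹x],[0,1]] ∈ Z·K_n` if and only if
`p^{−n} ≤ |y₂⁻¹y₁|_p ≤ p^{n}` and `|x|_p² ≤ p^{n}·|y₁y₂|_p`. -/
theorem mem_ZKn_iff (p : ℕ) [Fact p.Prime] (n : ℕ) (y₁ y₂ x : ℚ_[p])
    (hy₁ : y₁ ≠ 0) (hy₂ : y₂ ≠ 0) :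
    !![y₂⁻¹ * y₁, y₂⁻¹ * x; 0, 1] ∈ ZKn p n ↔
      ((p : ℝ) ^ (-(n : ℤ)) ≤ ‖y₂⁻¹ * y₁‖ ∧ ‖y₂⁻¹ * y₁‖ ≤ (p : ℝ) ^ (n : ℤ) ∧
        ‖x‖ ^ 2 ≤ (p : ℝ) ^ (n : ℤ) * ‖y₁ * y₂‖) := by
  have hp : (0 : ℝ) < p := by exact_mod_cast (Fact.out : p.Prime).pos
  have hpn : (0 : ℝ) < (p : ℝ) ^ n := by positivity
  have ha : y₂⁻¹ * y₁ ≠ 0 := mul_ne_zero (inv_ne_zero hy₂) hy₁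
  have ha' : 0 < ‖y₂⁻¹ * y₁‖ := norm_pos_iff.2 ha
  have hy2' : 0 < ‖y₂‖ := norm_pos_iff.2 hy₂
  have key : ‖x‖ ^ 2 ≤ (p : ℝ) ^ n * ‖y₁ * y₂‖ ↔
      ‖y₂⁻¹ * x‖ ^ 2 ≤ (p : ℝ) ^ n * ‖y₂⁻¹ * y₁‖ := by
    rw [← mul_le_mul_iff_right₀ (show 0 < ‖y₂‖⁻¹ ^ 2 by positivity)]
    simp only [norm_mul, norm_inv]
    have e : ‖y₂‖⁻¹ ^ 2 * ((p : ℝ) ^ n * (‖y₁‖ * ‖y₂‖)) = (p : ℝ) ^ n * (‖y₂‖⁻¹ * ‖y₁‖) := by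
      field_simp
    rw [e, mul_pow]
  rw [_root_.zpow_neg, zpow_natCast, inv_le_iff_one_le_mul₀' hpn, key]
  constructor
  · intro h
    have hB := ZKn_bound p n _ h
    simp only [Matrix.det_fin_two_of, mul_one, mul_zero, sub_zero] at hB
    refine ⟨by simpa using hB 1 1, ?_, hB 0 1⟩
    have h00 : ‖y₂⁻¹ * y₁‖ ^ 2 ≤ (p : ℝ) ^ n * ‖y₂⁻¹ * y₁‖ := hB 0 0
    rw [sq] at h00
    exact le_of_mul_le_mul_right h00 ha'
  · rintro ⟨h1, h2, h3⟩
    exact tri_mem p n _ _ ha h1 h2 h3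
end
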